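/- arXiv:2208.10604 — 2 statements merged into one kernel-verified Lean document; each statement's English description precedes it below -/
import Mathlib

section
/- Let G be a group and suppose some constant δ ∈ (0,1) witnesses the strong Erdős–Hajnal property for triple products in G. Then there are constants c > 0 and ε ∈ (0,1) such that every finite subset X ⊆ G distinct from {1}, with doubling constant k = |X·X|/|X|, contains a product-free subset of size at least ε·|X|/k^c. -/
open Finset Pointwise

/-- A finite subset `A` of a group is product-free if `x * y ∉ A` for all `x, y ∈ A`. -/
def ProductFree {G : Type*} [Group G] (A : Finset G) : Prop :=
  ∀ x ∈ A, ∀ y ∈ A, x * y ∉ A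

/-- `δ` witnesses the strong Erdős–Hajnal property for the triple-product relation
`x₁x₂x₃ = y₁y₂y₃` in the group `G`. -/
def TripleSEH (G : Type*) [Group G] (δ : ℝ) : Prop :=
  ∀ U₁ U₂ U₃ V₁ V₂ V₃ : Finset G,
    ∃ U₁' ⊆ U₁, ∃ U₂' ⊆ U₂, ∃ U₃' ⊆ U₃, ∃ V₁' ⊆ V₁, ∃ V₂' ⊆ V₂, ∃ V₃' ⊆ V₃,
      δ * U₁.card ≤ U₁'.card ∧ δ * U₂.card ≤ U₂'.card ∧ δ * U₃.card ≤ U₃'.card ∧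
      δ * V₁.card ≤ V₁'.card ∧ δ * V₂.card ≤ V₂'.card ∧ δ * V₃.card ≤ V₃'.card ∧
      ((∀ u₁ ∈ U₁', ∀ u₂ ∈ U₂', ∀ u₃ ∈ U₃', ∀ v₁ ∈ V₁', ∀ v₂ ∈ V₂', ∀ v₃ ∈ V₃',
          u₁ * u₂ * u₃ = v₁ * v₂ * v₃) ∨
       (∀ u₁ ∈ U₁', ∀ u₂ ∈ U₂', ∀ u₃ ∈ U₃', ∀ v₁ ∈ V₁', ∀ v₂ ∈ V₂', ∀ v₃ ∈ V₃',
          u₁ * u₂ * u₃ ≠ v₁ * v₂ * v₃))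

/-!
Suppose that every product-free subset of `X` is small. By the Erdős–Hajnal property, any `W ⊆ X`
has large subsets `W₁, W₂`, and any `Y ⊆ X` a subset `Y'` with three quarters of its elements, such
that `Y' W₂` misses `W₁`. Then `(Y ∩ W₂ s) ∩ g (Y' ∩ W₁ s)` is product-free for all `s` and `g`, so
`|Y ∩ W₂ s| |Y' ∩ W₁ s|` is small and hence, for each `s`, one of the two factors is.
Now let `S` be a set whose translates `w S`, `w ∈ W`, contain `Y` up to a few exceptions. Splitting
`S` according to which factor is small, double counting shows that for half of the `w ∈ W₁` the
translate of one part still contains almost all of `Y'`, and for half of the `w ∈ W₂` the translate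
of the other part still contains almost all of `Y`. Starting from `W = Y = X` and `S = X⁻¹ X`, each
of `i` rounds doubles the number of disjoint parts, while the sets to be covered shrink only by the
factor `3 / 4`; thus `|X⁻¹ X|` is at least of order `(3 / 2) ^ i |X|`. Since
`|X⁻¹ X| ≤ k ^ 2 |X|`, this fails once `i` exceeds a suitable multiple of `1 + log k`.
-/

open scoped RightActions

section SeparationProperties

/-- The strong Erdős–Hajnal property for the ternary relation `u * w = v` in the group `G`, with
constant `δ`. -/
def MulSEH (G : Type*) [Group G] (δ : ℝ) : Prop :=
  ∀ U W V : Finset G, ∃ U' ⊆ U, ∃ W' ⊆ W, ∃ V' ⊆ V,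
    δ * #U ≤ #U' ∧ δ * #W ≤ #W' ∧ δ * #V ≤ #V' ∧
      ((∀ u ∈ U', ∀ w ∈ W', ∀ v ∈ V', u * w = v) ∨
        (∀ u ∈ U', ∀ w ∈ W', ∀ v ∈ V', u * w ≠ v))

/-- A version of the strong Erdős–Hajnal property for `u * w = v` in which three quarters of one
set `Y` are kept, at the price of a smaller proportion `γ` for the two subsets `W₁, W₂` of the other
set `W`; the bound `2 ≤ γ * #W` excludes the alternative that `u * w = v` always holds. -/
def MulSeparation (G : Type*) [Group G] (γ : ℝ) : Prop :=
  ∀ W Y : Finset G, 2 ≤ γ * #W → ∃ Y' ⊆ Y, ∃ W₁ ⊆ W, ∃ W₂ ⊆ W,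
    3 / 4 * (#Y : ℝ) ≤ #Y' ∧ γ * #W ≤ #W₁ ∧ γ * #W ≤ #W₂ ∧ ∀ u ∈ Y', ∀ w ∈ W₂, u * w ∉ W₁

variable {G : Type*} [Group G] {δ : ℝ}

theorem TripleSEH.mulSEH (h : TripleSEH G δ) (hδ : 0 < δ) : MulSEH G δ := by
  intro U W V
  obtain ⟨U', hU, W', hW, T₁, hT₁, V', hV, T₂, hT₂, T₃, hT₃, hU', hW', hT₁', hV', hT₂', hT₃', h⟩ :=
    h U W {1} V {1} {1}
  have eq_one {T : Finset G} (hT : T ⊆ {1}) (hT' : δ * #({1} : Finset G) ≤ #T) : T = {1} := by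
    refine (subset_singleton_iff.1 hT).resolve_left fun hT₀ ↦ ?_
    simp only [hT₀, card_singleton, card_empty, Nat.cast_one, Nat.cast_zero, mul_one] at hT'
    exact hδ.not_ge hT'
  obtain rfl := eq_one hT₁ hT₁'
  obtain rfl := eq_one hT₂ hT₂'
  obtain rfl := eq_one hT₃ hT₃'
  exact ⟨U', hU, W', hW, V', hV, hU', hW', hV', by simpa using h⟩

theorem MulSEH.exists_forall_mul_notMem (h : MulSEH G δ) (U W V : Finset G) (hδV : 2 ≤ δ * #V) :
    ∃ U' ⊆ U, ∃ W' ⊆ W, ∃ V' ⊆ V, δ * #U ≤ #U' ∧ δ * #W ≤ #W' ∧ δ * #V ≤ #V' ∧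
      ∀ u ∈ U', ∀ w ∈ W', u * w ∉ V' := by
  obtain ⟨U', hU, W', hW, V', hV, hU', hW', hV', h | h⟩ := h U W V
  · have one_lt : 1 < #V' := by exact_mod_cast one_lt_two.trans_le (hδV.trans hV')
    obtain ⟨a, ha, b, hb, hab⟩ := one_lt_card.1 one_lt
    exact ⟨U', hU, W', hW, V', hV, hU', hW', hV', fun u hu w hw _ ↦
      hab ((h u hu w hw a ha).symm.trans (h u hu w hw b hb))⟩
  · exact ⟨U', hU, W', hW, V', hV, hU', hW', hV', fun u hu w hw hv ↦ h u hu w hw _ hv rfl⟩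

theorem MulSEH.exists_card_sdiff_le [DecidableEq G] (h : MulSEH G δ) (hδ : δ ∈ Set.Ioo 0 1)
    (W Y : Finset G) (n : ℕ) (hW : 2 ≤ δ ^ n * #W) :
    ∃ Y' ⊆ Y, ∃ W₁ ⊆ W, ∃ W₂ ⊆ W, (#(Y \ Y') : ℝ) ≤ (1 - δ) ^ n * #Y ∧
      δ ^ n * #W ≤ #W₁ ∧ δ ^ n * #W ≤ #W₂ ∧ ∀ u ∈ Y', ∀ w ∈ W₂, u * w ∉ W₁ := by
  obtain ⟨hδ₀, hδ₁⟩ := hδ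
  induction n with
  | zero => exact ⟨∅, by simp, W, subset_rfl, W, subset_rfl, by simp⟩
  | succ n ih =>
    rw [pow_succ' δ, mul_assoc] at hW ⊢
    obtain ⟨Y', hY', W₁, hW₁, W₂, hW₂, hcardY, hcard₁, hcard₂, hsep⟩ :=
      ih (hW.trans (mul_le_of_le_one_left (by positivity) hδ₁.le))
    obtain ⟨Z, hZ, W₂', hW₂', W₁', hW₁', hcardZ, hcard₂', hcard₁', hsep'⟩ :=
      h.exists_forall_mul_notMem (Y \ Y') W₂ W₁ (hW.trans (by gcongr))
    refine ⟨Y' ∪ Z, union_subset hY' (hZ.trans sdiff_subset), W₁', hW₁'.trans hW₁, W₂',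
      hW₂'.trans hW₂, ?_, le_trans (by gcongr) hcard₁', le_trans (by gcongr) hcard₂', ?_⟩
    · calc (#(Y \ (Y' ∪ Z)) : ℝ) = #(Y \ Y') - #Z := by
            rw [← sup_eq_union, ← sdiff_sdiff_left, cast_card_sdiff hZ]
        _ ≤ (1 - δ) * #(Y \ Y') := by linarith
        _ ≤ (1 - δ) * ((1 - δ) ^ n * #Y) := by gcongr
        _ = (1 - δ) ^ (n + 1) * #Y := by ring
    · intro u hu w hw hv
      rcases mem_union.1 hu with hu | hu
      · exact hsep u hu w (hW₂' hw) (hW₁' hv)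
      · exact hsep' u hu w hw hv

theorem MulSEH.mulSeparation (h : MulSEH G δ) (hδ : δ ∈ Set.Ioo 0 1) {m : ℕ}
    (hm : (1 - δ) ^ m ≤ 1 / 4) : MulSeparation G (δ ^ m) := by
  classical
  intro W Y hW
  obtain ⟨Y', hY', W₁, hW₁, W₂, hW₂, hcard, hsep⟩ := h.exists_card_sdiff_le hδ W Y m hW
  refine ⟨Y', hY', W₁, hW₁, W₂, hW₂, ?_, hsep⟩
  have hsmall : (1 - δ) ^ m * #Y ≤ 1 / 4 * #Y := by gcongr
  rw [cast_card_sdiff hY'] at hcard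
  linarith

end SeparationProperties

section Counting

theorem half_card_le_card_filter_le {α : Type*} {W : Finset α} {f : α → ℝ} {β : ℝ} (hβ : 0 < β)
    (hf : ∀ w ∈ W, 0 ≤ f w) (hsum : ∑ w ∈ W, f w ≤ β * (#W / 2)) :
    (#W / 2 : ℝ) ≤ #{w ∈ W | f w ≤ β} := by
  have hlarge : β * #{w ∈ W | ¬f w ≤ β} ≤ β * (#W / 2) := by
    calc β * #{w ∈ W | ¬f w ≤ β} = #{w ∈ W | ¬f w ≤ β} • β := by rw [nsmul_eq_mul, mul_comm]
      _ ≤ ∑ w ∈ W with ¬f w ≤ β, f w :=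
        card_nsmul_le_sum _ _ _ fun w hw ↦ (not_le.1 (mem_filter.1 hw).2).le
      _ ≤ ∑ w ∈ W, f w := sum_le_sum_of_subset_of_nonneg (filter_subset _ _) fun w hw _ ↦ hf w hw
      _ ≤ β * (#W / 2) := hsum
  have hsplit : (#{w ∈ W | f w ≤ β} + #{w ∈ W | ¬f w ≤ β} : ℝ) = #W := by
    exact_mod_cast card_filter_add_card_filter_not (s := W) (fun w ↦ f w ≤ β)
  linarith [le_of_mul_le_mul_left hlarge hβ]

variable {G : Type*} [Group G] [DecidableEq G]

theorem sum_card_inter_smul_comm (W T Y : Finset G) :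
    ∑ w ∈ W, #(Y ∩ w •> T) = ∑ s ∈ T, #(Y ∩ W <• s) := by
  have hleft (w : G) : #(Y ∩ w •> T) = #{s ∈ T | w * s ∈ Y} := by
    rw [← card_smul_finset w {s ∈ T | w * s ∈ Y}]
    congr 1
    ext y
    simp [← inv_smul_mem_iff, and_comm]
  have hright (s : G) : #(Y ∩ W <• s) = #{w ∈ W | w * s ∈ Y} := by
    rw [← card_smul_finset (MulOpposite.op s) {w ∈ W | w * s ∈ Y}]
    congr 1
    ext y
    simp [← inv_smul_mem_iff, and_comm]
  simp only [hleft, hright]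
  exact sum_card_bipartiteAbove_eq_sum_card_bipartiteBelow fun w s ↦ w * s ∈ Y

theorem half_card_le_card_filter_card_inter_smul_le {W T Y : Finset G} {β t : ℝ} (hβ : 0 < β)
    (ht : ∀ s ∈ T, (#(Y ∩ W <• s) : ℝ) ≤ t) (htT : t * #T ≤ β * (#W / 2)) :
    (#W / 2 : ℝ) ≤ #{w ∈ W | (#(Y ∩ w •> T) : ℝ) ≤ β} := by
  refine half_card_le_card_filter_le hβ (fun w _ ↦ Nat.cast_nonneg _) ?_
  calc ∑ w ∈ W, (#(Y ∩ w •> T) : ℝ) = ∑ s ∈ T, (#(Y ∩ W <• s) : ℝ) := by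
        exact_mod_cast sum_card_inter_smul_comm W T Y
    _ ≤ #T • t := sum_le_card_nsmul _ _ _ ht
    _ = t * #T := by rw [nsmul_eq_mul, mul_comm]
    _ ≤ β * (#W / 2) := htT

theorem sum_card_inter_smul (P Q : Finset G) :
    ∑ g ∈ P * Q⁻¹, #(P ∩ g •> Q) = #P * #Q := by
  simp only [card_inter_smul, ← card_inv Q, ← card_product, convolution]
  exact (card_eq_sum_card_fiberwise fun p hp ↦
    mul_mem_mul (mem_product.1 hp).1 (mem_product.1 hp).2).symm

end Counting

section ProductFree

variable {G : Type*} [Group G] [DecidableEq G]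

theorem productFree_inter_smul {P Q : Finset G} (h : ∀ q ∈ Q, ∀ p ∈ P, q * p ∉ Q) (g : G) :
    ProductFree (P ∩ g •> Q) := by
  simp only [ProductFree, mem_inter, mem_smul_finset, smul_eq_mul]
  rintro _ ⟨-, q, hq, rfl⟩ p ⟨hp, -⟩ ⟨-, q', hq', heq⟩
  rw [mul_assoc, mul_left_cancel_iff] at heq
  exact h q hq p hp (heq ▸ hq')

theorem card_mul_card_le_of_forall_mul_notMem {P Q : Finset G} {a : ℝ}
    (ha : ∀ A ⊆ P, ProductFree A → (#A : ℝ) ≤ a) (h : ∀ q ∈ Q, ∀ p ∈ P, q * p ∉ Q) :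
    (#P * #Q : ℝ) ≤ a * #(P * Q⁻¹) := by
  calc (#P * #Q : ℝ) = ∑ g ∈ P * Q⁻¹, (#(P ∩ g •> Q) : ℝ) := by
        exact_mod_cast (sum_card_inter_smul P Q).symm
    _ ≤ #(P * Q⁻¹) • a :=
      sum_le_card_nsmul _ _ _ fun g _ ↦ ha _ inter_subset_left (productFree_inter_smul h g)
    _ = a * #(P * Q⁻¹) := by rw [nsmul_eq_mul, mul_comm]

theorem card_inter_op_smul_mul_card_inter_op_smul_le {X Y Y' W₁ W₂ : Finset G} {a : ℝ}
    (ha : ∀ A ⊆ X, ProductFree A → (#A : ℝ) ≤ a) (hY : Y ⊆ X) (hY' : Y' ⊆ X)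
    (hsep : ∀ u ∈ Y', ∀ w ∈ W₂, u * w ∉ W₁) (s : G) :
    (#(Y ∩ W₂ <• s) * #(Y' ∩ W₁ <• s) : ℝ) ≤ a * #(X * X⁻¹) := by
  have ha₀ : 0 ≤ a := by simpa using ha ∅ (empty_subset X) (by simp [ProductFree])
  have hP : Y ∩ W₂ <• s ⊆ X := inter_subset_left.trans hY
  have hQ : Y' ∩ W₁ <• s ⊆ X := inter_subset_left.trans hY'
  refine (card_mul_card_le_of_forall_mul_notMem (fun A hA ↦ ha A (hA.trans hP)) ?_).trans
    (by gcongr)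
  simp only [mem_inter, mem_smul_finset, MulOpposite.smul_eq_mul_unop, MulOpposite.unop_op]
  rintro q ⟨hq, -⟩ _ ⟨-, w, hw, rfl⟩ ⟨-, v, hv, heq⟩
  rw [← mul_assoc, mul_right_cancel_iff] at heq
  exact hsep q hq w hw (heq ▸ hv)

end ProductFree

section AlmostCovers

variable {G : Type*} [Group G] [DecidableEq G]

/-- Each translate `w S` with `w ∈ W` contains all but at most `b` elements of `Y`. -/
def AlmostCovers (b : ℝ) (W S Y : Finset G) : Prop :=
  ∀ w ∈ W, (#(Y \ w •> S) : ℝ) ≤ b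

variable {b β t γ a : ℝ} {X W W' S T T' Y Y' : Finset G}

theorem AlmostCovers.card_sub_le (h : AlmostCovers b W S Y) (hW : W.Nonempty) :
    #Y - b ≤ #S := by
  obtain ⟨w, hw⟩ := hW
  have hY : (#Y : ℝ) ≤ #(Y \ w •> S) + #S := by
    rw [← card_smul_finset w S]
    exact_mod_cast card_le_card_sdiff_add_card
  linarith [h w hw]

theorem AlmostCovers.restrict (h : AlmostCovers b W S Y) (hW : W' ⊆ W) (hY : Y' ⊆ Y)
    (hS : S ⊆ T ∪ T') :
    AlmostCovers (b + β) {w ∈ W' | (#(Y' ∩ w •> T') : ℝ) ≤ β} T Y' := by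
  intro w hw
  rw [mem_filter] at hw
  have hsub : Y' \ w •> T ⊆ (Y \ w •> S) ∪ (Y' ∩ w •> T') := by
    intro y
    have hyS := @hS (w⁻¹ * y)
    simp only [mem_union, mem_sdiff, mem_inter, ← inv_smul_mem_iff, smul_eq_mul] at hyS ⊢
    have := @hY y
    tauto
  calc (#(Y' \ w •> T) : ℝ) ≤ #(Y \ w •> S) + #(Y' ∩ w •> T') := by
        exact_mod_cast (card_le_card hsub).trans (card_union_le _ _)
    _ ≤ b + β := add_le_add (h w (hW hw.1)) hw.2

theorem AlmostCovers.exists_split (hG : MulSeparation G γ) (hβ : 0 < β) (ht : 0 ≤ t)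
    (ha : ∀ A ⊆ X, ProductFree A → (#A : ℝ) ≤ a) (hat : a * #(X * X⁻¹) ≤ t ^ 2) (hYX : Y ⊆ X)
    (hW : 1 ≤ γ / 2 * #W) (htS : t * #S ≤ β * (γ / 2 * #W)) (h : AlmostCovers b W S Y) :
    ∃ Y' ⊆ Y, ∃ W₁ ⊆ W, ∃ W₂ ⊆ W, ∃ S' ⊆ S, 3 / 4 * (#Y : ℝ) ≤ #Y' ∧
      γ / 2 * #W ≤ #W₁ ∧ γ / 2 * #W ≤ #W₂ ∧
      AlmostCovers (b + β) W₁ S' Y' ∧ AlmostCovers (b + β) W₂ (S \ S') Y := by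
  obtain ⟨Y', hY', W₁, hW₁, W₂, hW₂, hcardY, hcard₁, hcard₂, hsep⟩ := hG W Y (by linarith)
  set S' : Finset G := {s ∈ S | t < #(Y' ∩ W₁ <• s)}
  have hS' : S' ⊆ S := filter_subset _ _
  have hfew₁ : ∀ s ∈ S \ S', (#(Y' ∩ W₁ <• s) : ℝ) ≤ t := by
    intro s hs
    by_contra! hlt
    exact (mem_sdiff.1 hs).2 (mem_filter.2 ⟨(mem_sdiff.1 hs).1, hlt⟩)
  have hfew₂ : ∀ s ∈ S', (#(Y ∩ W₂ <• s) : ℝ) ≤ t := by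
    intro s hs
    have hprod := (card_inter_op_smul_mul_card_inter_op_smul_le ha hYX (hY'.trans hYX) hsep s).trans
      hat
    by_contra! hlt
    nlinarith [(mem_filter.1 hs).2]
  have hsum {V T : Finset G} (hT : T ⊆ S) (hV : γ * #W ≤ #V) : t * #T ≤ β * (#V / 2) :=
    calc t * #T ≤ t * #S := by gcongr
      _ ≤ β * (γ / 2 * #W) := htS
      _ ≤ β * (#V / 2) := by gcongr; linarith
  have hhalf₁ := half_card_le_card_filter_card_inter_smul_le hβ hfew₁ (hsum sdiff_subset hcard₁)
  have hhalf₂ := half_card_le_card_filter_card_inter_smul_le hβ hfew₂ (hsum hS' hcard₂)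
  exact ⟨Y', hY', _, (filter_subset _ _).trans hW₁, _, (filter_subset _ _).trans hW₂, S', hS',
    hcardY, by linarith, by linarith,
    h.restrict hW₁ hY' (union_sdiff_of_subset hS').superset,
    h.restrict hW₂ subset_rfl (sdiff_union_of_subset hS').superset⟩

theorem AlmostCovers.two_pow_mul_le_card (hG : MulSeparation G γ) (hγ : γ ∈ Set.Ioc 0 1)
    (hβ : 0 < β) (ht : 0 ≤ t) (ha : ∀ A ⊆ X, ProductFree A → (#A : ℝ) ≤ a)
    (hat : a * #(X * X⁻¹) ≤ t ^ 2) (i : ℕ) (hYX : Y ⊆ X) (hW : 1 ≤ (γ / 2) ^ i * #W)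
    (htS : t * #S ≤ β * ((γ / 2) ^ i * #W)) (h : AlmostCovers b W S Y) :
    2 ^ i * ((3 / 4) ^ i * #Y - b - i * β) ≤ #S := by
  obtain ⟨hγ₀, hγ₁⟩ := hγ
  induction i generalizing W S Y b with
  | zero =>
    have hWpos : 0 < #W := by
      rw [pow_zero, one_mul] at hW
      exact_mod_cast zero_lt_one.trans_le hW
    simpa using h.card_sub_le (card_pos.1 hWpos)
  | succ i ih =>
    have hpow : (γ / 2) ^ (i + 1) * #W ≤ γ / 2 * #W := by
      gcongr
      exact pow_le_of_le_one (by positivity) (by linarith) i.succ_ne_zero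
    obtain ⟨Y', hY', W₁, -, W₂, -, S', hS', hcardY, hcard₁, hcard₂, hcov₁, hcov₂⟩ :=
      h.exists_split hG hβ ht ha hat hYX (hW.trans hpow) (htS.trans (by gcongr))
    have hstep {V : Finset G} (hV : γ / 2 * #W ≤ #V) :
        (γ / 2) ^ (i + 1) * #W ≤ (γ / 2) ^ i * #V := by
      rw [pow_succ, mul_assoc]
      gcongr
    have hhalf {V T Z : Finset G} (hV : γ / 2 * #W ≤ #V) (hT : T ⊆ S) (hZX : Z ⊆ X)
        (hZ : 3 / 4 * (#Y : ℝ) ≤ #Z) (hcov : AlmostCovers (b + β) V T Z) :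
        2 ^ i * ((3 / 4) ^ (i + 1) * #Y - b - (i + 1) * β) ≤ (#T : ℝ) :=
      calc 2 ^ i * ((3 / 4) ^ (i + 1) * #Y - b - (i + 1) * β)
          = 2 ^ i * ((3 / 4) ^ i * (3 / 4 * #Y) - (b + β) - i * β) := by ring
        _ ≤ 2 ^ i * ((3 / 4) ^ i * #Z - (b + β) - i * β) := by gcongr
        _ ≤ #T := by
          refine ih hZX (hW.trans (hstep hV)) ?_ hcov
          calc t * #T ≤ t * #S := by gcongr
            _ ≤ β * ((γ / 2) ^ (i + 1) * #W) := htS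
            _ ≤ β * ((γ / 2) ^ i * #V) := by gcongr ?_ * ?_; exact hstep hV
    have h₁ := hhalf hcard₁ hS' (hY'.trans hYX) hcardY hcov₁
    have h₂ := hhalf hcard₂ sdiff_subset hYX (by linarith [(#Y).cast_nonneg (α := ℝ)]) hcov₂
    rw [cast_card_sdiff hS'] at h₂
    push_cast
    rw [pow_succ 2 i]
    linarith

end AlmostCovers

section Doubling

variable {G : Type*} [Group G] [DecidableEq G] {X : Finset G} {K a γ : ℝ}

theorem card_inv_mul_self_le (hK : #(X * X) ≤ K * #X) : #(X⁻¹ * X) ≤ K ^ 2 * #X := by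
  rcases X.eq_empty_or_nonempty with rfl | hX
  · simp
  refine le_of_mul_le_mul_left ?_ (Nat.cast_pos (α := ℝ).2 hX.card_pos)
  calc (#X * #(X⁻¹ * X) : ℝ) ≤ #(X * X) * #(X * X) := by
        exact_mod_cast ruzsa_triangle_inequality_invMul_mul_mul X X X
    _ ≤ (K * #X) * (K * #X) := by gcongr; exact (Nat.cast_nonneg _).trans hK
    _ = #X * (K ^ 2 * #X) := by ring

theorem card_mul_inv_self_le (hK : #(X * X) ≤ K * #X) : #(X * X⁻¹) ≤ K ^ 2 * #X := by
  rcases X.eq_empty_or_nonempty with rfl | hX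
  · simp
  refine le_of_mul_le_mul_right ?_ (Nat.cast_pos (α := ℝ).2 hX.card_pos)
  calc (#(X * X⁻¹) * #X : ℝ) ≤ #(X * X) * #(X * X) := by
        exact_mod_cast ruzsa_triangle_inequality_mulInv_mul_mul X X X
    _ ≤ (K * #X) * (K * #X) := by gcongr; exact (Nat.cast_nonneg _).trans hK
    _ = K ^ 2 * #X * #X := by ring

theorem one_le_of_card_mul_self_le (hX : X.Nonempty) (hK : #(X * X) ≤ K * #X) : 1 ≤ K := by
  have hn : (0 : ℝ) < #X := by exact_mod_cast hX.card_pos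
  have hle : (#X : ℝ) ≤ #(X * X) := by exact_mod_cast card_le_card_mul_right hX
  exact le_of_mul_le_mul_right (by linarith) hn

theorem almostCovers_inv_mul (X : Finset G) : AlmostCovers 0 X (X⁻¹ * X) X := by
  intro w hw
  rw [Nat.cast_nonpos, card_eq_zero, sdiff_eq_empty_iff_subset]
  intro y hy
  rw [← inv_smul_mem_iff]
  exact mul_mem_mul (inv_mem_inv hw) hy

theorem MulSeparation.three_halves_pow_mul_card_le (hG : MulSeparation G γ)
    (hγ : γ ∈ Set.Ioc 0 1) {t : ℝ} (ht : 0 ≤ t) (ha : ∀ A ⊆ X, ProductFree A → (#A : ℝ) ≤ a)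
    (hat : a * #(X * X⁻¹) ≤ t ^ 2) {i : ℕ} (hX : 1 ≤ (γ / 2) ^ i * #X)
    (htX : t * #(X⁻¹ * X) ≤ (3 * γ / 16) ^ i * #X ^ 2 / 2) :
    ((3 / 2) ^ i * #X : ℝ) ≤ 2 * #(X⁻¹ * X) := by
  have hn : (0 : ℝ) < #X := pos_of_mul_pos_right (zero_lt_one.trans_le hX)
    (pow_nonneg (half_pos hγ.1).le i)
  -- Chosen so that the total number of exceptions `i * β` is at most half of `(3 / 4) ^ i * #X`.
  set β : ℝ := (3 / 8) ^ i * #X / 2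
  have hβ : 0 < β := by positivity
  have hloss : i * β ≤ (3 / 4) ^ i * #X / 2 := by
    calc i * β ≤ 2 ^ i * β := by
          gcongr
          exact_mod_cast Nat.lt_two_pow_self.le
      _ = (2 * (3 / 8)) ^ i * #X / 2 := by
        rw [mul_pow]
        ring
      _ = (3 / 4) ^ i * #X / 2 := by norm_num
  have htβ : t * #(X⁻¹ * X) ≤ β * ((γ / 2) ^ i * #X) := by
    calc t * #(X⁻¹ * X) ≤ (3 / 8 * (γ / 2)) ^ i * #X ^ 2 / 2 := by
          convert htX using 4
          ring
      _ = β * ((γ / 2) ^ i * #X) := by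
        rw [mul_pow]
        ring
  calc ((3 / 2) ^ i * #X : ℝ) = 2 * (2 ^ i * ((3 / 4) ^ i * #X / 2)) := by
        rw [show (3 / 2 : ℝ) = 2 * (3 / 4) by norm_num, mul_pow]
        ring
    _ ≤ 2 * (2 ^ i * ((3 / 4) ^ i * #X - 0 - i * β)) := by
      gcongr
      linarith
    _ ≤ 2 * #(X⁻¹ * X) := by
      gcongr
      exact (almostCovers_inv_mul X).two_pow_mul_le_card hG hγ hβ ht ha hat i subset_rfl hX htβ

theorem MulSeparation.three_halves_pow_le_two_mul_sq (hG : MulSeparation G γ) (hγ : γ ∈ Set.Ioc 0 1)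
    (hX : X.Nonempty) (hK : #(X * X) ≤ K * #X) (ha : ∀ A ⊆ X, ProductFree A → (#A : ℝ) ≤ a)
    (ha₁ : 1 ≤ a) {i : ℕ} (hai : a ≤ ((3 * γ / 16) ^ 2) ^ i * #X / (4 * K ^ 6)) :
    (3 / 2) ^ i ≤ 2 * K ^ 2 := by
  have hγ₀ : 0 < γ := hγ.1
  have hK₁ : 1 ≤ K := one_le_of_card_mul_self_le hX hK
  have hn : (0 : ℝ) < #X := by exact_mod_cast hX.card_pos
  have hbig : 1 ≤ (γ / 2) ^ i * #X := by
    calc 1 ≤ ((3 * γ / 16) ^ 2) ^ i * #X / (4 * K ^ 6) := ha₁.trans hai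
      _ ≤ ((3 * γ / 16) ^ 2) ^ i * #X :=
        div_le_self (by positivity) (by linarith [one_le_pow₀ hK₁ (n := 6)])
      _ ≤ (γ / 2) ^ i * #X := by
        gcongr
        nlinarith [hγ.2]
  set t : ℝ := (3 * γ / 16) ^ i * #X / (2 * K ^ 2)
  have hat : a * #(X * X⁻¹) ≤ t ^ 2 := by
    calc a * #(X * X⁻¹) ≤ ((3 * γ / 16) ^ 2) ^ i * #X / (4 * K ^ 6) * (K ^ 2 * #X) := by
          gcongr
          exact card_mul_inv_self_le hK
      _ = t ^ 2 := by
        rw [pow_right_comm]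
        simp only [t]
        field_simp
        norm_num
  have htX : t * #(X⁻¹ * X) ≤ (3 * γ / 16) ^ i * #X ^ 2 / 2 := by
    calc t * #(X⁻¹ * X) ≤ t * (K ^ 2 * #X) := by
          gcongr
          exact card_inv_mul_self_le hK
      _ = (3 * γ / 16) ^ i * #X ^ 2 / 2 := by
        simp only [t]
        field_simp
  refine le_of_mul_le_mul_right ?_ hn
  linarith [hG.three_halves_pow_mul_card_le hγ (by positivity) ha hat hbig htX,
    card_inv_mul_self_le hK]

end Doubling

theorem exists_lt_pow_and_div_pow_le_pow {θ r : ℝ} (hθ : 0 < θ) (hr : 1 < r) :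
    ∃ p : ℕ, ∀ x, 1 ≤ x → ∃ i : ℕ, x < r ^ i ∧ θ / x ^ p ≤ θ ^ i := by
  obtain ⟨p, hp⟩ := exists_pow_lt_of_lt_one hθ (inv_lt_one_of_one_lt₀ hr)
  refine ⟨p, fun x hx ↦ ?_⟩
  obtain ⟨j, hj, hj'⟩ := exists_nat_pow_near hx hr
  refine ⟨j + 1, hj', ?_⟩
  calc θ / x ^ p ≤ θ / (r ^ j) ^ p := by gcongr
    _ = θ * (r⁻¹ ^ p) ^ j := by rw [pow_right_comm, div_eq_mul_inv, inv_pow, inv_pow]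
    _ ≤ θ * θ ^ j := by gcongr
    _ = θ ^ (j + 1) := (pow_succ' θ j).symm

theorem stmt0_general (δ : ℝ) (hδ : δ ∈ Set.Ioo (0 : ℝ) 1) :
    ∃ c ε : ℝ, 0 < c ∧ ε ∈ Set.Ioo (0 : ℝ) 1 ∧
      ∀ (G : Type*) [Group G] [DecidableEq G], MulSEH G δ → ∀ X : Finset G, X ≠ {1} →
        ∃ A ⊆ X, ProductFree A ∧ ε * #X / ((#(X * X) : ℝ) / #X) ^ c ≤ #A := by
  obtain ⟨m, hm⟩ := exists_pow_lt_of_lt_one (show (0 : ℝ) < 1 / 4 by norm_num)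
    (sub_lt_self 1 hδ.1)
  have hγ : δ ^ m ∈ Set.Ioc 0 1 := ⟨pow_pos hδ.1 m, pow_le_one₀ hδ.1.le hδ.2.le⟩
  set θ : ℝ := (3 * δ ^ m / 16) ^ 2
  have hθ : 0 < θ := pow_pos (by linarith [hγ.1]) 2
  have hθ₁ : θ < 1 := pow_lt_one₀ (by linarith [hγ.1]) (by linarith [hγ.2]) two_ne_zero
  obtain ⟨p, hp⟩ := exists_lt_pow_and_div_pow_le_pow hθ (show (1 : ℝ) < 3 / 2 by norm_num)
  refine ⟨(2 * p + 6 : ℕ), θ / (4 * 2 ^ p), by positivity, ⟨by positivity, ?_⟩, ?_⟩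
  · rw [div_lt_one (by positivity)]
    linarith [one_le_pow₀ (one_le_two (α := ℝ)) (n := p)]
  intro G _ _ hG X hX₁
  rcases X.eq_empty_or_nonempty with rfl | hX
  · exact ⟨∅, by simp [ProductFree]⟩
  rw [Real.rpow_natCast]
  set K : ℝ := #(X * X) / #X
  have hK : #(X * X) ≤ K * #X := (div_mul_cancel₀ _ (by simpa using hX.ne_empty)).ge
  have hK₁ : 1 ≤ K := one_le_of_card_mul_self_le hX hK
  obtain ⟨i, hi, hθi⟩ := hp (2 * K ^ 2) (by nlinarith)
  obtain ⟨g, hg, hg₁⟩ := not_subset.1 (mt hX.subset_singleton_iff.1 hX₁)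
  by_contra! hsmall
  refine hi.not_ge ((hG.mulSeparation hδ hm.le).three_halves_pow_le_two_mul_sq hγ hX hK
    (fun A hA hA' ↦ (hsmall A hA hA').le) ?_ ?_)
  · simpa using (hsmall {g} (by simpa using hg) (by simpa [ProductFree] using hg₁)).le
  · calc θ / (4 * 2 ^ p) * #X / K ^ (2 * p + 6)
        = θ / (2 * K ^ 2) ^ p * #X / (4 * K ^ 6) := by
          rw [mul_pow, ← pow_mul, pow_add]
          field_simp
      _ ≤ θ ^ i * #X / (4 * K ^ 6) := by gcongr

theorem stmt0 {G : Type*} [Group G] [DecidableEq G] (δ : ℝ) (hδ : δ ∈ Set.Ioo (0 : ℝ) 1)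
    (hSEH : TripleSEH G δ) :
    ∃ c ε : ℝ, 0 < c ∧ ε ∈ Set.Ioo (0 : ℝ) 1 ∧
      ∀ X : Finset G, X ≠ {1} →
        ∃ A ⊆ X, ProductFree A ∧
          ε * X.card / (((X * X).card : ℝ) / X.card) ^ c ≤ A.card := by
  obtain ⟨c, ε, hc, hε, h⟩ := stmt0_general δ hδ
  exact ⟨c, ε, hc, hε, h G (hSEH.mulSEH hδ.1)⟩
end

section
/- Let G be a group and suppose some constant δ ∈ (0,1) witnesses the strong Erdős–Hajnal property for triple products in G. Then there are constants c > 0 and ε ∈ (0,1) such that for every real k ≥ 1, every finite k-approximate subgroup X ⊆ G distinct from {1} contains a product-free subset of size at least ε·|X|/k^c. -/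
open Finset Pointwise

/-! An approximate group satisfies `|X³| ≤ K |X|` with `K = k²`. As the products `bca` with
`a, b, c ∈ X` take at most `K |X|` values, collisions `bca = b₀c₀a₀` are plentiful by the
Cauchy–Schwarz inequality; with `g` the inverse of a popular `b₀c₀`, at least `|X|³ / K` of the
triples `(a, b, c) ∈ X × gX × X` satisfy `bca ∈ X`.

Among all subboxes take one maximising `count · volume ^ (θ - 1)` for a small `θ > 0`. It has volume
at least `|X|³ / K ^ (1 / θ)`, and each of its large subboxes still has half of the original
density, since otherwise one of the three boxes making up the complement would be too dense. The
Erdős–Hajnal property, applied with all `Vᵢ = {1}`, gives a large subbox `U` of it on which `abc` is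
constantly or never `1`. In the first case `U` has at most one element, so `|X|` is bounded by a
power of `K` and a singleton suffices. In the second case fix popular values of `bc` and `ca`: the
products `bca ∈ X` of the triples in `U` with these values are distinct and form a product-free set,
because `b₁c₁a₁ · b₂c₂a₂ = b₃c₃a₃` would force `c₃a₁b₂ = 1`. -/

lemma exists_le_forall_mul_le_rpow {ι : Type*} [Preorder ι] [LocallyFiniteOrderBot ι]
    {v n : ι → ℝ} (hv : Monotone v) (hv₀ : ∀ i, 0 ≤ v i) (hnv : ∀ i, n i ≤ v i)
    {i₀ : ι} {d θ : ℝ} (hi₀ : 0 < v i₀) (hd : 0 < d) (hθ : 0 < θ) (hp : d * v i₀ ≤ n i₀) :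
    ∃ i ≤ i₀, d ^ θ⁻¹ * v i₀ ≤ v i ∧ d * v i ≤ n i ∧
      ∀ j ≤ i, v i * n j ≤ n i * (v j ^ (1 - θ) * v i ^ θ) := by
  obtain ⟨i, hi, hmax⟩ := (Iic i₀).exists_max_image (fun j ↦ n j * v j ^ (θ - 1))
    ⟨i₀, mem_Iic.2 le_rfl⟩
  simp only [mem_Iic] at hi hmax
  have mul_rpow {x : ℝ} (hx : 0 ≤ x) : x * x ^ (θ - 1) = x ^ θ := by
    rw [← Real.rpow_one_add' hx (by simpa using hθ.ne'), add_sub_cancel]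
  have hstart : d * v i₀ ^ θ ≤ n i * v i ^ (θ - 1) := calc
    d * v i₀ ^ θ = d * v i₀ * v i₀ ^ (θ - 1) := by rw [mul_assoc, mul_rpow hi₀.le]
    _ ≤ n i₀ * v i₀ ^ (θ - 1) := by gcongr
    _ ≤ n i * v i ^ (θ - 1) := hmax i₀ le_rfl
  have hni : 0 < n i := pos_of_mul_pos_left
    ((by positivity : 0 < d * v i₀ ^ θ).trans_le hstart) (Real.rpow_nonneg (hv₀ i) _)
  have hvi : 0 < v i := hni.trans_le (hnv i)
  refine ⟨i, hi, ?_, ?_, fun j hj ↦ ?_⟩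
  · calc d ^ θ⁻¹ * v i₀ = (d * v i₀ ^ θ) ^ θ⁻¹ := by
          rw [Real.mul_rpow hd.le (by positivity), Real.rpow_rpow_inv hi₀.le hθ.ne']
      _ ≤ (v i ^ θ) ^ θ⁻¹ := by grw [hstart, hnv i, mul_rpow hvi.le]
      _ = v i := Real.rpow_rpow_inv hvi.le hθ.ne'
  · refine le_of_mul_le_mul_right ?_ (by positivity : 0 < v i ^ (θ - 1))
    calc d * v i * v i ^ (θ - 1) = d * v i ^ θ := by rw [mul_assoc, mul_rpow hvi.le]
      _ ≤ d * v i₀ ^ θ := by gcongr; exact hv hi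
      _ ≤ n i * v i ^ (θ - 1) := hstart
  · obtain hvj | hvj := (hv₀ j).eq_or_lt
    · calc v i * n j ≤ 0 := mul_nonpos_of_nonneg_of_nonpos hvi.le ((hnv j).trans hvj.ge)
        _ ≤ n i * (v j ^ (1 - θ) * v i ^ θ) := by have := hv₀ j; positivity
    · calc v i * n j = v i * (n j * v j ^ (θ - 1)) * v j ^ (1 - θ) := by
            rw [← neg_sub θ, Real.rpow_neg hvj.le]; field_simp
        _ ≤ v i * (n i * v i ^ (θ - 1)) * v j ^ (1 - θ) := by
            gcongr v i * ?_ * _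
            exact hmax j (hj.trans hi)
        _ = n i * (v j ^ (1 - θ) * v i ^ θ) := by rw [← mul_rpow hvi.le]; ring

lemma sq_card_le_card_mul_sum_card_fiber {α β : Type*} [DecidableEq β] {s : Finset α}
    {t : Finset β} {f : α → β} (hf : ∀ x ∈ s, f x ∈ t) :
    #s ^ 2 ≤ #t * ∑ z ∈ s, #{x ∈ s | f x = f z} := calc
  #s ^ 2 = (∑ y ∈ t, #{x ∈ s | f x = y}) ^ 2 := by rw [← card_eq_sum_card_fiberwise hf]
  _ ≤ #t * ∑ y ∈ t, #{x ∈ s | f x = y} ^ 2 := sq_sum_le_card_mul_sum_sq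
  _ = #t * ∑ z ∈ s, #{x ∈ s | f x = f z} := by
    simp_rw [← sum_fiberwise_of_maps_to hf fun z ↦ #{x ∈ s | f x = f z}]
    congr! 2 with y
    rw [sum_congr rfl fun z hz ↦ by rw [(mem_filter.1 hz).2], sum_const, smul_eq_mul, sq]

/-- The box `U × V × W` given by the triple `(U, V, W)` of its sides. It takes a single argument so
that inclusion of boxes becomes the componentwise order on triples of finite sets. -/
def tripleBox {α β γ : Type*} (W : Finset α × Finset β × Finset γ) : Finset (α × β × γ) :=
  W.1 ×ˢ W.2.1 ×ˢ W.2.2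

section Box

variable {α β γ : Type*} {p : α × β × γ → Prop} [DecidablePred p]
  {U W W₀ : Finset α × Finset β × Finset γ}

lemma tripleBox_mono (h : U ≤ W) : tripleBox U ⊆ tripleBox W :=
  product_subset_product h.1 (product_subset_product h.2.1 h.2.2)

variable (p) in
lemma card_filter_tripleBox_eq_add [DecidableEq α] [DecidableEq β] [DecidableEq γ]
    (h : U ≤ W) :
    #{x ∈ tripleBox W | p x} = #{x ∈ tripleBox U | p x}
      + #{x ∈ tripleBox (W.1 \ U.1, W.2) | p x}
      + #{x ∈ tripleBox (U.1, W.2.1 \ U.2.1, W.2.2) | p x}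
      + #{x ∈ tripleBox (U.1, U.2.1, W.2.2 \ U.2.2) | p x} := by
  obtain ⟨h₁, h₂, h₃⟩ := h
  simp only [tripleBox, card_filter, sum_product]
  simp_rw [← sum_sdiff h₁, ← sum_sdiff h₂ (f := fun _ ↦ ∑ _ ∈ W.2.2, _),
    ← sum_sdiff h₃ (f := fun _ ↦ ite _ 1 0), sum_add_distrib]
  ring

lemma half_density_mul_card_le_of_forall_le_rpow {η : ℝ} (hη₀ : 0 < η) (hη₁ : η ≤ 1)
    (hW : ∀ Z ≤ W, (#(tripleBox W) : ℝ) * #{x ∈ tripleBox Z | p x} ≤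
      #{x ∈ tripleBox W | p x} * (#(tripleBox Z) ^ (1 - η / 6) * #(tripleBox W) ^ (η / 6)))
    (hU : U ≤ W) (hηU : η * #(tripleBox W) ≤ #(tripleBox U)) :
    (#{x ∈ tripleBox W | p x} : ℝ) / 2 * #(tripleBox U) ≤
      #(tripleBox W) * #{x ∈ tripleBox U | p x} := by
  classical
  have le_linear (Z) (hZ : Z ≤ W) : (#(tripleBox W) : ℝ) * #{x ∈ tripleBox Z | p x} ≤
      #{x ∈ tripleBox W | p x} * ((1 - η / 6) * #(tripleBox Z) + η / 6 * #(tripleBox W)) := by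
    grw [hW Z hZ, Real.geom_mean_le_arith_mean2_weighted (by linarith) (by positivity)
      (by positivity) (by positivity) (by ring)]
  have hcount := congrArg (Nat.cast (R := ℝ)) (card_filter_tripleBox_eq_add p hU)
  have hvol := congrArg (Nat.cast (R := ℝ)) (card_filter_tripleBox_eq_add (fun _ ↦ True) hU)
  push_cast [filter_true] at hcount hvol
  have h₁ := le_linear (W.1 \ U.1, W.2) ⟨sdiff_subset, le_rfl⟩
  have h₂ := le_linear (U.1, W.2.1 \ U.2.1, W.2.2) ⟨hU.1, sdiff_subset, le_rfl⟩
  have h₃ := le_linear (U.1, U.2.1, W.2.2 \ U.2.2) ⟨hU.1, hU.2.1, sdiff_subset⟩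
  have hηU' : η * #(tripleBox U) ≤ #(tripleBox U) :=
    mul_le_of_le_one_left (Nat.cast_nonneg _) hη₁
  calc (#{x ∈ tripleBox W | p x} : ℝ) / 2 * #(tripleBox U)
      = #{x ∈ tripleBox W | p x} * (#(tripleBox U) / 2) := by ring
    _ ≤ #{x ∈ tripleBox W | p x} *
          ((1 - η / 6) * #(tripleBox U) - η / 3 * #(tripleBox W)) := by gcongr; linarith
    _ ≤ #(tripleBox W) * #{x ∈ tripleBox U | p x} := by
      linear_combination h₁ + h₂ + h₃ + (#(tripleBox W) : ℝ) * hcount -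
        (1 - η / 6) * (#{x ∈ tripleBox W | p x} : ℝ) * hvol

theorem exists_tripleBox_lower_regular (hW₀ : (tripleBox W₀).Nonempty)
    {d η : ℝ} (hd : 0 < d) (hη₀ : 0 < η) (hη₁ : η ≤ 1)
    (hp : d * #(tripleBox W₀) ≤ #{x ∈ tripleBox W₀ | p x}) :
    ∃ W ≤ W₀, d ^ (6 / η) * #(tripleBox W₀) ≤ #(tripleBox W) ∧
      ∀ U ≤ W, η * #(tripleBox W) ≤ #(tripleBox U) →
        d / 2 * #(tripleBox U) ≤ #{x ∈ tripleBox U | p x} := by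
  classical
  have hvol₀ : (0 : ℝ) < #(tripleBox W₀) := mod_cast hW₀.card_pos
  obtain ⟨W, hW, hvol, hdens, hmax⟩ := exists_le_forall_mul_le_rpow
    (v := fun W ↦ #(tripleBox W)) (n := fun W ↦ #{x ∈ tripleBox W | p x}) (θ := η / 6)
    (fun _ _ h ↦ Nat.mono_cast (card_le_card (tripleBox_mono h))) (fun _ ↦ Nat.cast_nonneg _)
    (fun _ ↦ mod_cast card_filter_le _ _) hvol₀ hd (by positivity) hp
  rw [inv_div] at hvol
  refine ⟨W, hW, hvol, fun U hU hηU ↦ ?_⟩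
  have hpos : (0 : ℝ) < #(tripleBox W) := hvol.trans_lt' (by positivity)
  refine le_of_mul_le_mul_left ?_ hpos
  calc (#(tripleBox W) : ℝ) * (d / 2 * #(tripleBox U))
      = d * #(tripleBox W) / 2 * #(tripleBox U) := by ring
    _ ≤ #{x ∈ tripleBox W | p x} / 2 * #(tripleBox U) := by gcongr
    _ ≤ _ := half_density_mul_card_le_of_forall_le_rpow hη₀ hη₁ hmax hU hηU

end Box

section Group

variable {G : Type*} [Group G]

lemma TripleSEH.exists_box_of_mul_ne_one {δ : ℝ} (hδ : 0 < δ) (hSEH : TripleSEH G δ)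
    (W : Finset G × Finset G × Finset G) :
    ∃ U ≤ W, δ ^ 3 * #(tripleBox W) ≤ #(tripleBox U) ∧
      (#(tripleBox U) ≤ 1 ∨ ∀ x ∈ tripleBox U, x.1 * x.2.1 * x.2.2 ≠ 1) := by
  obtain ⟨U₁, hU₁, U₂, hU₂, U₃, hU₃, V₁, hV₁, V₂, hV₂, V₃, hV₃, cU₁, cU₂, cU₃, cV₁, cV₂, cV₃, h⟩ :=
    hSEH W.1 W.2.1 W.2.2 {1} {1} {1}
  have one_mem {V : Finset G} (hV : V ⊆ {1}) (cV : δ * #({1} : Finset G) ≤ #V) : 1 ∈ V := by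
    rw [card_singleton, Nat.cast_one, mul_one] at cV
    have : V.Nonempty := card_pos.1 (mod_cast hδ.trans_le cV)
    simp only [this.subset_singleton_iff.1 hV, mem_singleton]
  refine ⟨(U₁, U₂, U₃), ⟨hU₁, hU₂, hU₃⟩, ?_, h.imp (fun heq ↦ card_le_one.2 ?_) fun hne ↦ ?_⟩
  · simp only [tripleBox, card_product, Nat.cast_mul]
    calc δ ^ 3 * (#W.1 * (#W.2.1 * #W.2.2)) = δ * #W.1 * (δ * #W.2.1 * (δ * #W.2.2)) := by ring
      _ ≤ #U₁ * (#U₂ * #U₃) := by gcongr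
  · have mul_eq_one {a b c} (ha : a ∈ U₁) (hb : b ∈ U₂) (hc : c ∈ U₃) : a * b * c = 1 := by
      simpa using heq a ha b hb c hc 1 (one_mem hV₁ cV₁) 1 (one_mem hV₂ cV₂) 1 (one_mem hV₃ cV₃)
    simp only [tripleBox, mem_product]
    rintro ⟨a, b, c⟩ ⟨ha, hb, hc⟩ ⟨a', b', c'⟩ ⟨ha', hb', hc'⟩
    obtain rfl : a = a' := by simpa using (mul_eq_one ha hb hc).trans (mul_eq_one ha' hb hc).symm
    obtain rfl : b = b' := by simpa using (mul_eq_one ha hb hc).trans (mul_eq_one ha hb' hc).symm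
    obtain rfl : c = c' := by simpa using (mul_eq_one ha hb hc).trans (mul_eq_one ha hb hc').symm
    rfl
  · simp only [tripleBox, mem_product]
    rintro ⟨a, b, c⟩ ⟨ha, hb, hc⟩
    simpa using hne a ha b hb c hc 1 (one_mem hV₁ cV₁) 1 (one_mem hV₂ cV₂) 1 (one_mem hV₃ cV₃)

lemma productFree_of_forall_exists_mul_eq {U : Finset G × Finset G × Finset G}
    (hU : ∀ x ∈ tripleBox U, x.1 * x.2.1 * x.2.2 ≠ 1) {A : Finset G} (g h : G)
    (hA : ∀ z ∈ A, ∃ x ∈ tripleBox U, x.2.1 * x.2.2 = g ∧ x.2.2 * x.1 = h ∧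
      x.2.1 * x.2.2 * x.1 = z) :
    ProductFree A := by
  intro z₁ hz₁ z₂ hz₂ hz₃
  obtain ⟨⟨a, b₁, c₁⟩, hx₁, hg₁, -, rfl⟩ := hA z₁ hz₁
  obtain ⟨⟨a₂, b, c₂⟩, hx₂, -, hh₂, rfl⟩ := hA z₂ hz₂
  obtain ⟨⟨a₃, b₃, c⟩, hx₃, hg₃, hh₃, hz⟩ := hA _ hz₃
  simp only [tripleBox, mem_product] at hx₁ hx₂ hx₃ hU hg₁ hh₂ hg₃ hh₃ hz
  have ha₃ : a₃ = a * b * h := by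
    rwa [hg₃, hg₁, mul_assoc b, hh₂, mul_assoc, mul_right_inj, ← mul_assoc] at hz
  have hcab : c * (a * b) = 1 := by
    rwa [ha₃, ← mul_assoc, mul_eq_right] at hh₃
  exact hU (a, b, c) ⟨hx₁.1, hx₂.2.1, hx₃.2.2⟩ (mul_eq_one_comm.1 hcab)

lemma exists_mem_productFree_singleton {X : Finset G} (hX₀ : X.Nonempty) (hX : X ≠ {1}) :
    ∃ x ∈ X, ProductFree {x} := by
  obtain ⟨x, hx, hx₁⟩ : ∃ x ∈ X, x ≠ 1 := by
    by_contra! h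
    exact hX (eq_singleton_iff_nonempty_unique_mem.2 ⟨hX₀, h⟩)
  exact ⟨x, hx, by simpa [ProductFree] using hx₁⟩

variable [DecidableEq G]

lemma exists_productFree_card_filter_le {U : Finset G × Finset G × Finset G}
    (hU : ∀ x ∈ tripleBox U, x.1 * x.2.1 * x.2.2 ≠ 1) (X : Finset G) :
    ∃ A ⊆ X, ProductFree A ∧ #{x ∈ tripleBox U | x.2.1 * x.2.2 * x.1 ∈ X} ≤
      #A * (#(U.2.1 * U.2.2) * #(U.2.2 * U.1)) := by
  classical
  obtain ⟨A, hA, hmax⟩ := {A ∈ X.powerset | ProductFree A}.exists_max_image card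
    ⟨∅, mem_filter.2 ⟨empty_mem_powerset X, by simp [ProductFree]⟩⟩
  simp only [mem_filter, mem_powerset] at hA hmax
  refine ⟨A, hA.1, hA.2, ?_⟩
  rw [← card_product]
  refine card_le_mul_card_image_of_maps_to (f := fun x ↦ (x.2.1 * x.2.2, x.2.2 * x.1)) ?_ _ ?_
  · simp only [tripleBox, mem_filter, mem_product]
    exact fun x hx ↦ ⟨mul_mem_mul hx.1.2.1 hx.1.2.2, mul_mem_mul hx.1.2.2 hx.1.1⟩
  rintro ⟨g, h⟩ -
  rw [filter_filter]
  set F := {x ∈ tripleBox U | x.2.1 * x.2.2 * x.1 ∈ X ∧ (x.2.1 * x.2.2, x.2.2 * x.1) = (g, h)}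
    with hF
  have hinj : Set.InjOn (fun x : G × G × G ↦ x.2.1 * x.2.2 * x.1) F := by
    rintro ⟨a, b, c⟩ hx ⟨a', b', c'⟩ hx' hxx'
    simp only [hF, coe_filter, Set.mem_ofPred_eq, Prod.mk.injEq] at hx hx' hxx'
    obtain ⟨-, -, rfl, rfl⟩ := hx
    obtain ⟨-, -, hg, hh⟩ := hx'
    obtain rfl : a' = a := by simpa [hg] using hxx'.symm
    obtain rfl : c' = c := by simpa using hh
    obtain rfl : b' = b := by simpa using hg
    rfl
  rw [← card_image_of_injOn hinj]
  refine hmax _ ⟨?_, productFree_of_forall_exists_mul_eq hU g h ?_⟩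
  · simp only [hF, image_subset_iff, mem_filter]
    exact fun x hx ↦ hx.2.1
  · simp only [hF, forall_mem_image, mem_filter, Prod.mk.injEq]
    exact fun x hx ↦ ⟨x, hx.1, hx.2.2.1, hx.2.2.2, rfl⟩

lemma sq_card_tripleBox_le (A B C : Finset G) :
    #(tripleBox (A, B, C)) ^ 2 ≤ #(B * C * A) *
      ∑ y ∈ B ×ˢ C, #{x ∈ tripleBox (A, B, C) | (y.1 * y.2)⁻¹ * (x.2.1 * x.2.2 * x.1) ∈ A} := by
  refine (sq_card_le_card_mul_sum_card_fiber (t := B * C * A)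
    (f := fun x ↦ x.2.1 * x.2.2 * x.1) ?_).trans_eq ?_
  · simp only [tripleBox, mem_product]
    exact fun x hx ↦ mul_mem_mul (mul_mem_mul hx.2.1 hx.2.2) hx.1
  · congr 1
    simp_rw [← inv_mul_eq_iff_eq_mul]
    rw [tripleBox, sum_product_right]
    exact sum_congr rfl fun y _ ↦ sum_card_fiberwise_eq_card_filter (A ×ˢ B ×ˢ C) A
      fun x ↦ (y.1 * y.2)⁻¹ * (x.2.1 * x.2.2 * x.1)

lemma exists_smul_card_filter_tripleBox_le (A B C : Finset G) :
    ∃ g : G, #A * #(tripleBox (A, B, C)) ≤ #(B * C * A) *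
      #{x ∈ tripleBox (A, g • B, C) | x.2.1 * x.2.2 * x.1 ∈ A} := by
  obtain hBC | hBC := (B ×ˢ C).eq_empty_or_nonempty
  · exact ⟨1, by simp [tripleBox, hBC]⟩
  have hsum : ∑ _y ∈ B ×ˢ C, #A * #(tripleBox (A, B, C)) ≤ ∑ y ∈ B ×ˢ C, #(B * C * A) *
      #{x ∈ tripleBox (A, B, C) | (y.1 * y.2)⁻¹ * (x.2.1 * x.2.2 * x.1) ∈ A} := by
    rw [sum_const, smul_eq_mul, ← mul_sum]
    refine (sq_card_tripleBox_le A B C).trans_eq' ?_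
    simp only [tripleBox, card_product]
    ring
  obtain ⟨y, -, hy⟩ := exists_le_of_sum_le hBC hsum
  refine ⟨(y.1 * y.2)⁻¹, hy.trans (Nat.mul_le_mul_left _ ?_)⟩
  refine card_le_card_of_injOn (fun x ↦ (x.1, (y.1 * y.2)⁻¹ * x.2.1, x.2.2)) ?_ ?_
  · simp only [tripleBox, coe_filter, mem_product]
    rintro x ⟨⟨ha, hb, hc⟩, hx⟩
    exact ⟨⟨ha, smul_mem_smul_finset hb, hc⟩, by simpa only [mul_assoc] using hx⟩
  · rintro x - x' - h
    simpa [Prod.ext_iff] using h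

theorem TripleSEH.exists_productFree_of_density {δ : ℝ} (hδ : δ ∈ Set.Ioo (0 : ℝ) 1)
    (hSEH : TripleSEH G δ) {X : Finset G} (hX : X ≠ {1}) {W : Finset G × Finset G × Finset G}
    (hW : (tripleBox W).Nonempty) {d : ℝ} (hd : 0 < d)
    (hWX : d * #(tripleBox W) ≤ #{x ∈ tripleBox W | x.2.1 * x.2.2 * x.1 ∈ X}) :
    ∃ A ⊆ X, ProductFree A ∧ d / 2 * (δ ^ 3 * (d ^ (6 / δ ^ 3) * #(tripleBox W))) ≤
      #A * (#(W.2.1 * W.2.2) * #(W.2.2 * W.1)) := by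
  obtain ⟨hδ₀, hδ₁⟩ := hδ
  obtain ⟨V, hVW, hV, hreg⟩ := exists_tripleBox_lower_regular hW hd (pow_pos hδ₀ 3)
    (pow_le_one₀ hδ₀.le hδ₁.le) hWX
  obtain ⟨U, hUV, hU, hU₁ | hfree⟩ := hSEH.exists_box_of_mul_ne_one hδ₀ V
  · have hvol : (0 : ℝ) < #(tripleBox W) := mod_cast hW.card_pos
    have hcount : (0 : ℝ) < #{x ∈ tripleBox W | x.2.1 * x.2.2 * x.1 ∈ X} :=
      hWX.trans_lt' (by positivity)
    have hd₁ : d ≤ 1 := le_of_mul_le_mul_right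
      (hWX.trans (by rw [one_mul]; exact mod_cast card_filter_le _ _)) hvol
    obtain ⟨x, hx⟩ := card_pos.1 (mod_cast hcount)
    obtain ⟨z, hz, hzfree⟩ := exists_mem_productFree_singleton ⟨_, (mem_filter.1 hx).2⟩ hX
    refine ⟨{z}, singleton_subset_iff.2 hz, hzfree, ?_⟩
    obtain ⟨h₁, h₂, h₃⟩ : W.1.Nonempty ∧ W.2.1.Nonempty ∧ W.2.2.Nonempty := by
      simpa [tripleBox] using hW
    calc d / 2 * (δ ^ 3 * (d ^ (6 / δ ^ 3) * #(tripleBox W)))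
        ≤ 1 * #(tripleBox U) := by grw [hV, hU]; gcongr; linarith
      _ ≤ 1 := by rw [one_mul]; exact mod_cast hU₁
      _ ≤ _ := by
        rw [card_singleton]
        exact_mod_cast Nat.mul_pos one_pos (Nat.mul_pos (h₂.mul h₃).card_pos (h₃.mul h₁).card_pos)
  · obtain ⟨A, hA, hAfree, hcard⟩ := exists_productFree_card_filter_le hfree X
    refine ⟨A, hA, hAfree, ?_⟩
    obtain ⟨h₁, h₂, h₃⟩ := hUV.trans hVW
    calc d / 2 * (δ ^ 3 * (d ^ (6 / δ ^ 3) * #(tripleBox W)))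
        ≤ d / 2 * #(tripleBox U) := by grw [hV, hU]
      _ ≤ #{x ∈ tripleBox U | x.2.1 * x.2.2 * x.1 ∈ X} := hreg U hUV hU
      _ ≤ #A * (#(U.2.1 * U.2.2) * #(U.2.2 * U.1)) := mod_cast hcard
      _ ≤ #A * (#(W.2.1 * W.2.2) * #(W.2.2 * W.1)) := by gcongr

theorem stmt1_general {δ : ℝ} (hδ : δ ∈ Set.Ioo (0 : ℝ) 1) (hSEH : TripleSEH G δ)
    {k : ℝ} {X : Finset G} (hX : X ≠ {1}) (hk : (#(X ^ 3) : ℝ) ≤ k * #X) :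
    ∃ A ⊆ X, ProductFree A ∧ δ ^ 3 / 2 * #X / k ^ (3 + 6 / δ ^ 3) ≤ #A := by
  obtain rfl | hX₀ := X.eq_empty_or_nonempty
  · exact ⟨∅, subset_rfl, by simp [ProductFree], by simp⟩
  have hn : (0 : ℝ) < #X := mod_cast hX₀.card_pos
  have hk₀ : 0 < k := pos_of_mul_pos_left (hk.trans_lt' (mod_cast hX₀.pow.card_pos)) hn.le
  have hsq : (#(X * X) : ℝ) ≤ k * #X := by
    rw [← sq]
    exact hk.trans' (mod_cast hX₀.card_pow_mono (by norm_num))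
  obtain ⟨g, hg⟩ := exists_smul_card_filter_tripleBox_le X X X
  have hdens : k⁻¹ * #(tripleBox (X, g • X, X)) ≤
      #{x ∈ tripleBox (X, g • X, X) | x.2.1 * x.2.2 * x.1 ∈ X} := by
    rw [inv_mul_le_iff₀ hk₀]
    refine le_of_mul_le_mul_left ?_ hn
    calc (#X : ℝ) * #(tripleBox (X, g • X, X)) = #X * #(tripleBox (X, X, X)) := by
          simp only [tripleBox, card_product, card_smul_finset]
      _ ≤ #(X ^ 3) * #{x ∈ tripleBox (X, g • X, X) | x.2.1 * x.2.2 * x.1 ∈ X} := by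
          rw [pow_three']
          exact_mod_cast hg
      _ ≤ k * #X * #{x ∈ tripleBox (X, g • X, X) | x.2.1 * x.2.2 * x.1 ∈ X} := by gcongr
      _ = #X * (k * #{x ∈ tripleBox (X, g • X, X) | x.2.1 * x.2.2 * x.1 ∈ X}) := by ring
  obtain ⟨A, hA, hAfree, hcard⟩ := hSEH.exists_productFree_of_density hδ hX
    (by simpa [tripleBox] using hX₀) (inv_pos.2 hk₀) hdens
  simp only [tripleBox, card_product, card_smul_finset, smul_mul_assoc, Nat.cast_mul] at hcard
  refine ⟨A, hA, hAfree, le_of_mul_le_mul_right ?_ (by positivity : 0 < (k * #X) ^ 2)⟩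
  calc δ ^ 3 / 2 * #X / k ^ (3 + 6 / δ ^ 3) * (k * #X) ^ 2
      = k⁻¹ / 2 * (δ ^ 3 * (k⁻¹ ^ (6 / δ ^ 3) * (#X * (#X * #X : ℝ)))) := by
        rw [Real.rpow_add hk₀, Real.rpow_ofNat, Real.inv_rpow hk₀.le]
        field_simp
    _ ≤ #A * ((#(X * X) : ℝ) * #(X * X)) := hcard
    _ ≤ #A * (k * #X * (k * #X)) := by gcongr
    _ = #A * (k * #X) ^ 2 := by rw [sq]

end Group

theorem stmt1 {G : Type*} [Group G] [DecidableEq G] (δ : ℝ) (hδ : δ ∈ Set.Ioo (0 : ℝ) 1)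
    (hSEH : TripleSEH G δ) :
    ∃ c ε : ℝ, 0 < c ∧ ε ∈ Set.Ioo (0 : ℝ) 1 ∧
      ∀ k : ℝ, 1 ≤ k →
        ∀ X : Finset G, X ≠ {1} →
          (1 : G) ∈ X → X⁻¹ = X →
          (∃ T : Finset G, (T.card : ℝ) ≤ k ∧ X * X ⊆ T * X) →
          ∃ A ⊆ X, ProductFree A ∧ ε * X.card / k ^ c ≤ A.card := by
  have hδ₀ : 0 < δ := hδ.1
  have hδ₁ : δ ^ 3 ≤ 1 := pow_le_one₀ hδ₀.le hδ.2.le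
  refine ⟨2 * (3 + 6 / δ ^ 3), δ ^ 3 / 2, by positivity, ⟨by positivity, by linarith⟩,
    fun k hk X hX hone hinv ⟨T, hT, hXT⟩ ↦ ?_⟩
  have happrox : IsApproximateSubgroup k (X : Set G) :=
    ⟨mod_cast hone, mod_cast hinv, T, hT, by rw [sq]; exact_mod_cast hXT⟩
  have htripling : (#(X ^ 3) : ℝ) ≤ k ^ 2 * #X := happrox.card_pow_le
  rw [Real.rpow_mul (by linarith), Real.rpow_two]
  exact stmt1_general hδ hSEH hX htripling
end
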